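/- Assume N ≥ 3, and let S be an arbitrary invertible 2×2 complex matrix, with ξ₁,…,ξ_N defined via S as in the context. Then (i) an element ω ∈ Ω satisfies dω = 0 if and only if ω ∼ a + Σ_α ξ₁^α a_α for some polynomials a, a₁, a₂ ∈ ℂ[ψ₂,…,ψ_N, χ₂,…,χ_N]; and (ii) such a combination is ∼ 0 if and only if a = ½ Σ_{i=2}^{N} Σ_{j=2}^{N} (ξᵢ·ξⱼ)² d and Σ_α ξ₁^α a_α = Σ_{i=2}^{N} (ξ₁·ξᵢ)(ξᵢ¹d₁ + ξᵢ²d₂) for some polynomials d, d₁, d₂ ∈ ℂ[ψ₂,…,ψ_N, χ₂,…,χ_N]. -/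

import Mathlib

/-!
D = 3 supersymmetry algebra cohomology.
`R3 N = ℂ[ψ₁,…,ψ_N, χ₁,…,χ_N]`, `Om3 N` is the free module with basis
`{1, c̃₁, c̃₂, c̃₃, c̃₁c̃₂, c̃₁c̃₃, c̃₂c̃₃, c̃₁c̃₂c̃₃}` (components 0,…,7), and
`d3` is the odd superderivation with `dc̃₁ = P`, `dc̃₂ = Q`, `dc̃₃ = S`, `d|_R = 0`.
-/

open MvPolynomial

noncomputable section

/-- The polynomial ring `ℂ[ψ₁,…,ψ_N, χ₁,…,χ_N]`; `Sum.inl i ↦ ψᵢ`, `Sum.inr i ↦ χᵢ`. -/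
abbrev R3 (N : ℕ) : Type := MvPolynomial (Fin N ⊕ Fin N) ℂ

/-- `Ω`: free `R3`-module with basis
`{1, c̃₁, c̃₂, c̃₃, c̃₁c̃₂, c̃₁c̃₃, c̃₂c̃₃, c̃₁c̃₂c̃₃}` (components 0,…,7). -/
abbrev Om3 (N : ℕ) : Type := Fin 8 → R3 N

/-- The ghost `ψᵢ`. -/
def ψ {N : ℕ} (i : Fin N) : R3 N := X (Sum.inl i)

/-- The ghost `χᵢ`. -/
def χ {N : ℕ} (i : Fin N) : R3 N := X (Sum.inr i)

/-- `P = Σ ψᵢ²`. -/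
def PP (N : ℕ) : R3 N := ∑ i, ψ i ^ 2

/-- `Q = Σ χᵢ²`. -/
def QQ (N : ℕ) : R3 N := ∑ i, χ i ^ 2

/-- `S = Σ ψᵢχᵢ`. -/
def SS (N : ℕ) : R3 N := ∑ i, ψ i * χ i

/-- The differential: the unique R-linear odd superderivation with
`dc̃₁ = P`, `dc̃₂ = Q`, `dc̃₃ = S` and `d|_R = 0`, written out in components:
`d(ω₀ + c̃₁ω₁ + c̃₂ω₂ + c̃₃ω₃ + c̃₁c̃₂ω₄ + c̃₁c̃₃ω₅ + c̃₂c̃₃ω₆ + c̃₁c̃₂c̃₃ω₇)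
 = Pω₁ + Qω₂ + Sω₃ + (Pc̃₂ − Qc̃₁)ω₄ + (Pc̃₃ − Sc̃₁)ω₅ + (Qc̃₃ − Sc̃₂)ω₆
   + (Pc̃₂c̃₃ − Qc̃₁c̃₃ + Sc̃₁c̃₂)ω₇`. -/
def d3 {N : ℕ} (ω : Om3 N) : Om3 N :=
  ![PP N * ω 1 + QQ N * ω 2 + SS N * ω 3,
    -(QQ N * ω 4) - SS N * ω 5,
    PP N * ω 4 - SS N * ω 6,
    PP N * ω 5 + QQ N * ω 6,
    SS N * ω 7,
    -(QQ N * ω 7),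
    PP N * ω 7,
    0]

/-- Embedding of `R` into `Ω` (coefficient of the basis element `1`). -/
def ofR3 {N : ℕ} (r : R3 N) : Om3 N := ![r, 0, 0, 0, 0, 0, 0, 0]

/-- `ω ∼ ω'` iff `ω − ω' = dρ` for some `ρ`. -/
def Equiv3 {N : ℕ} (ω ω' : Om3 N) : Prop := ∃ ρ, ω - ω' = d3 ρ

/-- The invariant `ξᵢ·ξⱼ = ψᵢχⱼ − χᵢψⱼ`. -/
def xidot {N : ℕ} (i j : Fin N) : R3 N := ψ i * χ j - χ i * ψ j

/-- `Θᵢⱼ = i(c̃₃(ψᵢχⱼ + ψⱼχᵢ) − c̃₁χᵢχⱼ − c̃₂ψᵢψⱼ)` as an element of `Ω`. -/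
def Theta {N : ℕ} (i j : Fin N) : Om3 N :=
  ![0,
    -(C Complex.I * (χ i * χ j)),
    -(C Complex.I * (ψ i * ψ j)),
    C Complex.I * (ψ i * χ j + ψ j * χ i),
    0, 0, 0, 0]

/-- The supersymmetry ghost `ξᵢ = (ψᵢ, iχᵢ)·S⁻¹` (row spinor, entries in `R`). -/
def xi3 {N : ℕ} (S : Matrix (Fin 2) (Fin 2) ℂ) (i : Fin N) (α : Fin 2) : R3 N :=
  C (S⁻¹ 0 α) * ψ i + C (Complex.I * S⁻¹ 1 α) * χ i

/-- `ϑᵢ = (i(c̃₃ψᵢ − c̃₁χᵢ), c̃₃χᵢ − c̃₂ψᵢ)·S⁻¹` (row spinor, entries in `Ω`). -/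
def theta3 {N : ℕ} (S : Matrix (Fin 2) (Fin 2) ℂ) (i : Fin N) (α : Fin 2) : Om3 N :=
  ![0,
    -(C (Complex.I * S⁻¹ 0 α) * χ i),
    -(C (S⁻¹ 1 α) * ψ i),
    C (Complex.I * S⁻¹ 0 α) * ψ i + C (S⁻¹ 1 α) * χ i,
    0, 0, 0, 0]

/-- The subring `ℂ[ψ₂,…,ψ_N, χ₂,…,χ_N]` of `R3 N`. -/
def coefRing3 (N : ℕ) (hN : 0 < N) : Subalgebra ℂ (R3 N) :=
  MvPolynomial.supported ℂ
    {v : Fin N ⊕ Fin N | v ≠ Sum.inl ⟨0, hN⟩ ∧ v ≠ Sum.inr ⟨0, hN⟩}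

/-! ### General facts about `ℂ[A][x,y]` modulo `x² + P'`, `y² + Q'` -/

/-- Substitution of elements of an extension ring for the two variables `x`, `y`. -/
def substHom {σ K : Type} [DecidableEq σ] [Field K] (ι : MvPolynomial σ ℂ →+* K) (x y : σ)
    (p q : K) : MvPolynomial σ ℂ →+* K :=
  eval₂Hom (ι.comp C) (fun v => if v = x then p else if v = y then q else ι (X v))

lemma substHom_supported {σ K : Type} [DecidableEq σ] [Field K] (ι : MvPolynomial σ ℂ →+* K)
    (x y : σ) (p q : K) (a : MvPolynomial σ ℂ)
    (ha : a ∈ supported ℂ {v : σ | v ≠ x ∧ v ≠ y}) :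
    substHom ι x y p q a = ι a := by
  rw [mem_supported] at ha
  refine hom_congr_vars ?_ ?_ rfl
  · ext; simp [substHom]
  · intro v hv _
    have := ha hv
    simp only [Set.mem_ofPred_eq] at this
    simp [substHom, this.1, this.2]

lemma substHom_x {σ K : Type} [DecidableEq σ] [Field K] (ι : MvPolynomial σ ℂ →+* K)
    (x y : σ) (p q : K) : substHom ι x y p q (X x) = p := by
  simp [substHom]

lemma substHom_y {σ K : Type} [DecidableEq σ] [Field K] (ι : MvPolynomial σ ℂ →+* K)
    (x y : σ) (hxy : x ≠ y) (p q : K) : substHom ι x y p q (X y) = q := by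
  simp [substHom, hxy.symm]

/-- An algebraically closed field extension of the polynomial ring. -/
lemma exists_big_field (σ : Type) : ∃ (K : Type) (_ : Field K) (_ : CharZero K)
    (ι : MvPolynomial σ ℂ →+* K), Function.Injective ι ∧ ∀ a : K, ∃ b : K, b ^ 2 = a := by
  let K := AlgebraicClosure (FractionRing (MvPolynomial σ ℂ))
  let ι : MvPolynomial σ ℂ →+* K :=
    (algebraMap (FractionRing (MvPolynomial σ ℂ)) K).comp (algebraMap _ _)
  have hι : Function.Injective ι :=
    (algebraMap (FractionRing (MvPolynomial σ ℂ)) K).injective.comp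
      (IsFractionRing.injective _ _)
  refine ⟨K, inferInstance, ?_, ι, hι, ?_⟩
  · exact charZero_of_injective_ringHom hι
  · intro a
    exact IsAlgClosed.exists_pow_nat_eq a (by norm_num)

/-- `1, x` are independent modulo `x² + P'`. -/
lemma uniq1 {σ : Type} [DecidableEq σ] (x : σ) (P c0 c1 u : MvPolynomial σ ℂ)
    (hP : P ∈ supported ℂ {v : σ | v ≠ x ∧ v ≠ x})
    (h0 : c0 ∈ supported ℂ {v : σ | v ≠ x ∧ v ≠ x})
    (h1 : c1 ∈ supported ℂ {v : σ | v ≠ x ∧ v ≠ x}) (hP0 : P ≠ 0)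
    (h : c0 + c1 * X x = (X x ^ 2 + P) * u) : c0 = 0 ∧ c1 = 0 := by
  obtain ⟨K, _, _, ι, hι, hsq⟩ := exists_big_field σ
  obtain ⟨p, hp⟩ := hsq (-ι P)
  have hp0 : p ≠ 0 := by
    rintro rfl
    apply hP0; apply hι; rw [map_zero]; simpa using hp.symm
  have key : ∀ p' : K, p' ^ 2 = -ι P → ι c0 + ι c1 * p' = 0 := by
    intro p' hp'
    have := congrArg (substHom ι x x p' p') h
    simp only [map_add, map_mul, map_pow, substHom_x, substHom_supported ι x x _ _ _ hP,
      substHom_supported ι x x _ _ _ h0, substHom_supported ι x x _ _ _ h1, hp'] at this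
    linear_combination this
  have e1 := key p hp
  have e2 := key (-p) (by rw [← hp]; ring)
  have a0 : ι c0 = 0 := by linear_combination (e1 + e2) / 2
  have a1 : ι c1 * p = 0 := by linear_combination (e1 - e2) / 2
  have a1' := (mul_eq_zero.mp a1).resolve_right hp0
  exact ⟨hι (by rw [a0, map_zero]), hι (by rw [a1', map_zero])⟩

/-- `1, x, y, xy` are independent modulo `x² + P'`, `y² + Q'`. -/
lemma uniq2 {σ : Type} [DecidableEq σ] (x y : σ) (hxy : x ≠ y)
    (P Q c0 c1 c2 c3 u v : MvPolynomial σ ℂ)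
    (hP : P ∈ supported ℂ {v : σ | v ≠ x ∧ v ≠ y})
    (hQ : Q ∈ supported ℂ {v : σ | v ≠ x ∧ v ≠ y})
    (h0 : c0 ∈ supported ℂ {v : σ | v ≠ x ∧ v ≠ y})
    (h1 : c1 ∈ supported ℂ {v : σ | v ≠ x ∧ v ≠ y})
    (h2 : c2 ∈ supported ℂ {v : σ | v ≠ x ∧ v ≠ y})
    (h3 : c3 ∈ supported ℂ {v : σ | v ≠ x ∧ v ≠ y}) (hP0 : P ≠ 0) (hQ0 : Q ≠ 0)
    (h : c0 + c1 * X x + c2 * X y + c3 * (X x * X y)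
      = (X x ^ 2 + P) * u + (X y ^ 2 + Q) * v) : c0 = 0 ∧ c1 = 0 ∧ c2 = 0 ∧ c3 = 0 := by
  obtain ⟨K, _, _, ι, hι, hsq⟩ := exists_big_field σ
  obtain ⟨p, hp⟩ := hsq (-ι P)
  obtain ⟨q, hq⟩ := hsq (-ι Q)
  have hp0 : p ≠ 0 := by
    rintro rfl
    apply hP0; apply hι; rw [map_zero]; simpa using hp.symm
  have hq0 : q ≠ 0 := by
    rintro rfl
    apply hQ0; apply hι; rw [map_zero]; simpa using hq.symm
  have key : ∀ p' q' : K, p' ^ 2 = -ι P → q' ^ 2 = -ι Q →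
      ι c0 + ι c1 * p' + ι c2 * q' + ι c3 * (p' * q') = 0 := by
    intro p' q' hp' hq'
    have := congrArg (substHom ι x y p' q') h
    simp only [map_add, map_mul, map_pow, substHom_x, substHom_y ι x y hxy,
      substHom_supported ι x y _ _ _ hP, substHom_supported ι x y _ _ _ hQ,
      substHom_supported ι x y _ _ _ h0, substHom_supported ι x y _ _ _ h1,
      substHom_supported ι x y _ _ _ h2, substHom_supported ι x y _ _ _ h3, hp', hq'] at this
    linear_combination this
  have hp' : (-p) ^ 2 = -ι P := by rw [← hp]; ring
  have hq' : (-q) ^ 2 = -ι Q := by rw [← hq]; ring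
  have e1 := key p q hp hq
  have e2 := key (-p) q hp' hq
  have e3 := key p (-q) hp hq'
  have e4 := key (-p) (-q) hp' hq'
  have a0 : ι c0 = 0 := by linear_combination (e1 + e2 + e3 + e4) / 4
  have a1 : ι c1 * p = 0 := by linear_combination (e1 - e2 + e3 - e4) / 4
  have a2 : ι c2 * q = 0 := by linear_combination (e1 + e2 - e3 - e4) / 4
  have a3 : ι c3 * (p * q) = 0 := by linear_combination (e1 - e2 - e3 + e4) / 4
  have a1' := (mul_eq_zero.mp a1).resolve_right hp0
  have a2' := (mul_eq_zero.mp a2).resolve_right hq0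
  have a3' := (mul_eq_zero.mp a3).resolve_right (mul_ne_zero hp0 hq0)
  exact ⟨hι (by rw [a0, map_zero]), hι (by rw [a1', map_zero]), hι (by rw [a2', map_zero]),
    hι (by rw [a3', map_zero])⟩

/-- Division by `x² + P'`. -/
lemma exist1 {σ : Type} (x : σ) (P : MvPolynomial σ ℂ)
    (hP : P ∈ supported ℂ {v : σ | v ≠ x ∧ v ≠ x}) (f : MvPolynomial σ ℂ) :
    ∃ u, ∃ c0 ∈ supported ℂ {v : σ | v ≠ x ∧ v ≠ x},
      ∃ c1 ∈ supported ℂ {v : σ | v ≠ x ∧ v ≠ x},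
      f = (X x ^ 2 + P) * u + c0 + c1 * X x := by
  induction f using MvPolynomial.induction_on with
  | C a => exact ⟨0, C a, Subalgebra.algebraMap_mem _ a, 0, zero_mem _, by ring⟩
  | add f g hf hg =>
    obtain ⟨u, c0, h0, c1, h1, e⟩ := hf
    obtain ⟨u', c0', h0', c1', h1', e'⟩ := hg
    exact ⟨u + u', _, add_mem h0 h0', _, add_mem h1 h1', by rw [e, e']; ring⟩
  | mul_X f w hf =>
    obtain ⟨u, c0, h0, c1, h1, e⟩ := hf
    by_cases hx : w = x
    · subst hx
      exact ⟨u * X w + c1, -(c1 * P), neg_mem (mul_mem h1 hP), c0, h0, by rw [e]; ring⟩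
    · have hw : (X w : MvPolynomial σ ℂ) ∈ supported ℂ {v : σ | v ≠ x ∧ v ≠ x} :=
        X_mem_supported.mpr ⟨hx, hx⟩
      exact ⟨u * X w, _, mul_mem h0 hw, _, mul_mem h1 hw, by rw [e]; ring⟩

/-- Reduction modulo `x² + P'`, `y² + Q'`. -/
lemma exist2 {σ : Type} (x y : σ) (P Q : MvPolynomial σ ℂ)
    (hP : P ∈ supported ℂ {v : σ | v ≠ x ∧ v ≠ y})
    (hQ : Q ∈ supported ℂ {v : σ | v ≠ x ∧ v ≠ y}) (f : MvPolynomial σ ℂ) :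
    ∃ u v, ∃ c0 ∈ supported ℂ {v : σ | v ≠ x ∧ v ≠ y},
      ∃ c1 ∈ supported ℂ {v : σ | v ≠ x ∧ v ≠ y},
      ∃ c2 ∈ supported ℂ {v : σ | v ≠ x ∧ v ≠ y},
      ∃ c3 ∈ supported ℂ {v : σ | v ≠ x ∧ v ≠ y},
      f = (X x ^ 2 + P) * u + (X y ^ 2 + Q) * v
        + (c0 + c1 * X x + c2 * X y + c3 * (X x * X y)) := by
  induction f using MvPolynomial.induction_on with
  | C a => exact ⟨0, 0, C a, Subalgebra.algebraMap_mem _ a, 0, zero_mem _, 0, zero_mem _,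
      0, zero_mem _, by ring⟩
  | add f g hf hg =>
    obtain ⟨u, v, c0, h0, c1, h1, c2, h2, c3, h3, e⟩ := hf
    obtain ⟨u', v', c0', h0', c1', h1', c2', h2', c3', h3', e'⟩ := hg
    exact ⟨u + u', v + v', _, add_mem h0 h0', _, add_mem h1 h1', _, add_mem h2 h2',
      _, add_mem h3 h3', by rw [e, e']; ring⟩
  | mul_X f w hf =>
    obtain ⟨u, v, c0, h0, c1, h1, c2, h2, c3, h3, e⟩ := hf
    by_cases hx : w = x
    · subst hx
      exact ⟨u * X w + c1 + c3 * X y, v * X w, -(c1 * P), neg_mem (mul_mem h1 hP), c0, h0,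
        -(c3 * P), neg_mem (mul_mem h3 hP), c2, h2, by rw [e]; ring⟩
    · by_cases hy : w = y
      · subst hy
        exact ⟨u * X w, v * X w + c2 + c3 * X x, -(c2 * Q), neg_mem (mul_mem h2 hQ),
          -(c3 * Q), neg_mem (mul_mem h3 hQ), c0, h0, c1, h1, by rw [e]; ring⟩
      · have hw : (X w : MvPolynomial σ ℂ) ∈ supported ℂ {v : σ | v ≠ x ∧ v ≠ y} :=
          X_mem_supported.mpr ⟨hx, hy⟩
        exact ⟨u * X w, v * X w, _, mul_mem h0 hw, _, mul_mem h1 hw, _, mul_mem h2 hw,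
          _, mul_mem h3 hw, by rw [e]; ring⟩

/-- Syzygies of the regular sequence `x² + P'`, `y² + Q'`. -/
lemma koszul2 {σ : Type} [DecidableEq σ] (x y : σ) (hxy : x ≠ y) (P Q u v : MvPolynomial σ ℂ)
    (hP : P ∈ supported ℂ {v : σ | v ≠ x ∧ v ≠ y})
    (hQ : Q ∈ supported ℂ {v : σ | v ≠ x ∧ v ≠ y}) (hP0 : P ≠ 0) (hPx : X x ^ 2 + P ≠ 0)
    (hQy : X y ^ 2 + Q ≠ 0)
    (h : (X x ^ 2 + P) * u + (X y ^ 2 + Q) * v = 0) :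
    ∃ w, u = (X y ^ 2 + Q) * w ∧ v = -((X x ^ 2 + P) * w) := by
  have hsub : supported ℂ {v : σ | v ≠ x ∧ v ≠ y} ≤ supported ℂ {v : σ | v ≠ x ∧ v ≠ x} :=
    supported_mono (fun v hv => ⟨hv.1, hv.1⟩)
  have hy : (X y : MvPolynomial σ ℂ) ∈ supported ℂ {v : σ | v ≠ x ∧ v ≠ x} :=
    X_mem_supported.mpr ⟨hxy.symm, hxy.symm⟩
  have hQy' : X y ^ 2 + Q ∈ supported ℂ {v : σ | v ≠ x ∧ v ≠ x} :=
    add_mem (pow_mem hy 2) (hsub hQ)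
  obtain ⟨w, c0, h0, c1, h1, e⟩ := exist1 x P (hsub hP) v
  obtain ⟨z0, z1⟩ := uniq1 x P ((X y ^ 2 + Q) * c0) ((X y ^ 2 + Q) * c1)
    (-u - (X y ^ 2 + Q) * w) (hsub hP) (mul_mem hQy' h0) (mul_mem hQy' h1) hP0
    (by rw [e] at h; linear_combination h)
  have c00 := (mul_eq_zero.mp z0).resolve_left hQy
  have c10 := (mul_eq_zero.mp z1).resolve_left hQy
  rw [c00, c10] at e
  refine ⟨-w, ?_, by rw [e]; ring⟩
  apply mul_left_cancel₀ hPx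
  rw [e] at h
  linear_combination h

/-- If `S f = a + b₁ x + b₂ y` modulo `P, Q` then the coefficients are given by `c`. -/
lemma mulS {σ : Type} [DecidableEq σ] (x y : σ) (hxy : x ≠ y)
    (P Q S a b1 b2 u v w : MvPolynomial σ ℂ)
    (hP : P ∈ supported ℂ {v : σ | v ≠ x ∧ v ≠ y})
    (hQ : Q ∈ supported ℂ {v : σ | v ≠ x ∧ v ≠ y})
    (hS : S ∈ supported ℂ {v : σ | v ≠ x ∧ v ≠ y})
    (ha : a ∈ supported ℂ {v : σ | v ≠ x ∧ v ≠ y})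
    (hb1 : b1 ∈ supported ℂ {v : σ | v ≠ x ∧ v ≠ y})
    (hb2 : b2 ∈ supported ℂ {v : σ | v ≠ x ∧ v ≠ y}) (hP0 : P ≠ 0) (hQ0 : Q ≠ 0)
    (h : a + b1 * X x + b2 * X y
      = (X x ^ 2 + P) * u + (X y ^ 2 + Q) * v + (X x * X y + S) * w) :
    ∃ u' v', ∃ c1 ∈ supported ℂ {v : σ | v ≠ x ∧ v ≠ y},
      ∃ c2 ∈ supported ℂ {v : σ | v ≠ x ∧ v ≠ y},
      ∃ c3 ∈ supported ℂ {v : σ | v ≠ x ∧ v ≠ y},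
      w = (X x ^ 2 + P) * u' + (X y ^ 2 + Q) * v'
        + (-(S * c3) + c1 * X x + c2 * X y + c3 * (X x * X y)) ∧
      a = (P * Q - S ^ 2) * c3 ∧ b1 = S * c1 - Q * c2 ∧ b2 = S * c2 - P * c1 := by
  obtain ⟨u', v', c0, h0, c1, h1, c2, h2, c3, h3, e⟩ := exist2 x y P Q hP hQ w
  obtain ⟨z0, z1, z2, z3⟩ := uniq2 x y hxy P Q (a - S * c0 - P * Q * c3)
    (b1 - S * c1 + Q * c2) (b2 - S * c2 + P * c1) (-c0 - S * c3)
    (u + (X x * X y + S) * u' + c1 * X y + c3 * X y ^ 2)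
    (v + (X x * X y + S) * v' + c2 * X x - P * c3) hP hQ
    (sub_mem (sub_mem ha (mul_mem hS h0)) (mul_mem (mul_mem hP hQ) h3))
    (add_mem (sub_mem hb1 (mul_mem hS h1)) (mul_mem hQ h2))
    (add_mem (sub_mem hb2 (mul_mem hS h2)) (mul_mem hP h1))
    (sub_mem (neg_mem h0) (mul_mem hS h3)) hP0 hQ0
    (by rw [e] at h; linear_combination h)
  have hc0 : c0 = -(S * c3) := by linear_combination -z3
  refine ⟨u', v', c1, h1, c2, h2, c3, h3, by rw [e, hc0], ?_, ?_, ?_⟩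
  · rw [hc0] at z0; linear_combination z0
  · linear_combination z1
  · linear_combination z2

/-- Syzygies of the regular sequence `x² + P'`, `y² + Q'`, `xy + S'`. -/
lemma koszul3 {σ : Type} [DecidableEq σ] (x y : σ) (hxy : x ≠ y)
    (P Q S u v w : MvPolynomial σ ℂ)
    (hP : P ∈ supported ℂ {v : σ | v ≠ x ∧ v ≠ y})
    (hQ : Q ∈ supported ℂ {v : σ | v ≠ x ∧ v ≠ y})
    (hS : S ∈ supported ℂ {v : σ | v ≠ x ∧ v ≠ y}) (hP0 : P ≠ 0) (hQ0 : Q ≠ 0)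
    (hPx : X x ^ 2 + P ≠ 0) (hQy : X y ^ 2 + Q ≠ 0) (hD : P * Q - S ^ 2 ≠ 0)
    (h : (X x ^ 2 + P) * u + (X y ^ 2 + Q) * v + (X x * X y + S) * w = 0) :
    ∃ r s t, u = -((X y ^ 2 + Q) * r) - (X x * X y + S) * s ∧
      v = (X x ^ 2 + P) * r - (X x * X y + S) * t ∧
      w = (X x ^ 2 + P) * s + (X y ^ 2 + Q) * t := by
  obtain ⟨u', v', c1, h1, c2, h2, c3, h3, e, e0, e1, e2⟩ := mulS x y hxy P Q S 0 0 0 u v w hP hQ hS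
    (zero_mem _) (zero_mem _) (zero_mem _) hP0 hQ0 (by rw [h]; ring)
  have z3 := (mul_eq_zero.mp e0.symm).resolve_left hD
  have z1 : (P * Q - S ^ 2) * c1 = 0 := by linear_combination S * e1 + Q * e2
  have z2 : (P * Q - S ^ 2) * c2 = 0 := by linear_combination P * e1 + S * e2
  have z1 := (mul_eq_zero.mp z1).resolve_left hD
  have z2 := (mul_eq_zero.mp z2).resolve_left hD
  rw [z1, z2, z3] at e
  obtain ⟨r, hr1, hr2⟩ := koszul2 x y hxy P Q (u + (X x * X y + S) * u')
    (v + (X x * X y + S) * v') hP hQ hP0 hPx hQy (by rw [e] at h; linear_combination h)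
  exact ⟨-r, u', v', by linear_combination hr1, by linear_combination hr2, by rw [e]; ring⟩

/-! ### The concrete situation -/

/-- `P' = Σ_{i ≥ 2} ψᵢ²`. -/
def Pr {N : ℕ} (z : Fin N) : R3 N := ∑ i ∈ Finset.univ.erase z, ψ i ^ 2

/-- `Q' = Σ_{i ≥ 2} χᵢ²`. -/
def Qr {N : ℕ} (z : Fin N) : R3 N := ∑ i ∈ Finset.univ.erase z, χ i ^ 2

/-- `S' = Σ_{i ≥ 2} ψᵢχᵢ`. -/
def Sr {N : ℕ} (z : Fin N) : R3 N := ∑ i ∈ Finset.univ.erase z, ψ i * χ i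

lemma PP_eq {N : ℕ} (z : Fin N) : PP N = X (Sum.inl z) ^ 2 + Pr z :=
  (Finset.add_sum_erase _ (fun i => ψ i ^ 2) (Finset.mem_univ z)).symm

lemma QQ_eq {N : ℕ} (z : Fin N) : QQ N = X (Sum.inr z) ^ 2 + Qr z :=
  (Finset.add_sum_erase _ (fun i => χ i ^ 2) (Finset.mem_univ z)).symm

lemma SS_eq {N : ℕ} (z : Fin N) : SS N = X (Sum.inl z) * X (Sum.inr z) + Sr z :=
  (Finset.add_sum_erase _ (fun i => ψ i * χ i) (Finset.mem_univ z)).symm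

lemma ψ_mem {N : ℕ} (z i : Fin N) (h : i ≠ z) :
    ψ i ∈ supported ℂ {v : Fin N ⊕ Fin N | v ≠ Sum.inl z ∧ v ≠ Sum.inr z} :=
  X_mem_supported.mpr ⟨by simpa using h, by simp⟩

lemma χ_mem {N : ℕ} (z i : Fin N) (h : i ≠ z) :
    χ i ∈ supported ℂ {v : Fin N ⊕ Fin N | v ≠ Sum.inl z ∧ v ≠ Sum.inr z} :=
  X_mem_supported.mpr ⟨by simp, by simpa using h⟩

lemma Pr_mem {N : ℕ} (z : Fin N) :
    Pr z ∈ supported ℂ {v : Fin N ⊕ Fin N | v ≠ Sum.inl z ∧ v ≠ Sum.inr z} :=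
  sum_mem fun i hi => pow_mem (ψ_mem z i (Finset.ne_of_mem_erase hi)) 2

lemma Qr_mem {N : ℕ} (z : Fin N) :
    Qr z ∈ supported ℂ {v : Fin N ⊕ Fin N | v ≠ Sum.inl z ∧ v ≠ Sum.inr z} :=
  sum_mem fun i hi => pow_mem (χ_mem z i (Finset.ne_of_mem_erase hi)) 2

lemma Sr_mem {N : ℕ} (z : Fin N) :
    Sr z ∈ supported ℂ {v : Fin N ⊕ Fin N | v ≠ Sum.inl z ∧ v ≠ Sum.inr z} :=
  sum_mem fun i hi => mul_mem (ψ_mem z i (Finset.ne_of_mem_erase hi))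
    (χ_mem z i (Finset.ne_of_mem_erase hi))

/-- Evaluation at `ψ = e_k`, `χ = e_l`. -/
def evPt {N : ℕ} (k l : Fin N) : R3 N →+* ℂ :=
  eval (Sum.elim (fun i => if i = k then 1 else 0) (fun i => if i = l then 1 else 0))

lemma evPt_ψ {N : ℕ} (k l i : Fin N) : evPt k l (ψ i) = if i = k then 1 else 0 := by
  simp [evPt, ψ]

lemma evPt_χ {N : ℕ} (k l i : Fin N) : evPt k l (χ i) = if i = l then 1 else 0 := by
  simp [evPt, χ]

lemma evPt_Pr {N : ℕ} (z k l : Fin N) (hk : k ≠ z) : evPt k l (Pr z) = 1 := by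
  simp [Pr, evPt_ψ, ite_pow, hk.symm]

lemma evPt_Qr {N : ℕ} (z k l : Fin N) (hl : l ≠ z) : evPt k l (Qr z) = 1 := by
  simp [Qr, evPt_χ, ite_pow, hl.symm]

lemma evPt_Sr {N : ℕ} (z k l : Fin N) (hkl : k ≠ l) : evPt k l (Sr z) = 0 := by
  refine (map_sum _ _ _).trans (Finset.sum_eq_zero fun i _ => ?_)
  rw [map_mul, evPt_ψ, evPt_χ]
  by_cases h : i = k
  · subst h; simp [hkl]
  · simp [h]

lemma sum_xidot_sq {N : ℕ} (z : Fin N) :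
    C (1/2 : ℂ) * (∑ i ∈ Finset.univ.erase z, ∑ j ∈ Finset.univ.erase z,
      (xidot i j : R3 N) ^ 2) = Pr z * Qr z - Sr z ^ 2 := by
  have h1 : ∀ i j : Fin N, (xidot i j : R3 N) ^ 2
      = ψ i ^ 2 * χ j ^ 2 + χ i ^ 2 * ψ j ^ 2 - 2 * ((ψ i * χ i) * (ψ j * χ j)) := by
    intro i j; unfold xidot; ring
  simp only [h1, Finset.sum_sub_distrib, Finset.sum_add_distrib, ← Finset.mul_sum,
    ← Finset.sum_mul]
  change C (1/2 : ℂ) * (Pr z * Qr z + Qr z * Pr z - 2 * (Sr z * Sr z)) = _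
  have h2 : (C (1/2 : ℂ) : R3 N) * 2 = 1 := by
    have : (2 : R3 N) = C 2 := (map_ofNat C 2).symm
    rw [this, ← C_mul]; norm_num
  linear_combination (Pr z * Qr z - Sr z ^ 2) * h2

lemma sum_xidot_lin {N : ℕ} (z : Fin N) (e1 e2 : R3 N) :
    ∑ i ∈ Finset.univ.erase z, xidot z i * (ψ i * e1 + χ i * e2)
      = X (Sum.inl z) * (Sr z * e1 + Qr z * e2) - X (Sum.inr z) * (Pr z * e1 + Sr z * e2) := by
  unfold Sr Qr Pr
  simp only [Finset.sum_mul, Finset.mul_sum, ← Finset.sum_add_distrib, ← Finset.sum_sub_distrib]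
  refine Finset.sum_congr rfl fun i _ => ?_
  change (X (Sum.inl z) * χ i - X (Sum.inr z) * ψ i) * _ = _
  ring

/-- Change of basis by the inverse spinor matrix. -/
lemma xi_inv {N : ℕ} (S : Matrix (Fin 2) (Fin 2) ℂ) (hS : IsUnit S.det) (e1 e2 : R3 N)
    (i : Fin N) :
    xi3 S i 0 * (C (S 0 0) * e1 - C (Complex.I * S 0 1) * e2)
      + xi3 S i 1 * (C (S 1 0) * e1 - C (Complex.I * S 1 1) * e2) = ψ i * e1 + χ i * e2 := by
  have h := Matrix.nonsing_inv_mul S hS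
  have h00 := congrFun (congrFun h 0) 0
  have h01 := congrFun (congrFun h 0) 1
  have h10 := congrFun (congrFun h 1) 0
  have h11 := congrFun (congrFun h 1) 1
  simp only [Matrix.mul_apply, Fin.sum_univ_two, Matrix.one_apply_eq, ne_eq, zero_ne_one,
    one_ne_zero, not_false_eq_true, Matrix.one_apply_ne] at h00 h01 h10 h11
  have g00 := congrArg (C : ℂ → R3 N) h00
  have g01 := congrArg (C : ℂ → R3 N) h01
  have g10 := congrArg (C : ℂ → R3 N) h10
  have g11 := congrArg (C : ℂ → R3 N) h11
  have hI : (C Complex.I : R3 N) * C Complex.I = -1 := by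
    rw [← C_mul, Complex.I_mul_I, C_neg, C_1]
  simp only [C_add, C_mul, C_1, C_0] at g00 g01 g10 g11
  simp only [xi3, C_mul]
  linear_combination ψ i * e1 * g00 - ψ i * e2 * C Complex.I * g01
    + χ i * e1 * C Complex.I * g10 + χ i * e2 * g11
    - (C (S⁻¹ 1 0) * C (S 0 1) + C (S⁻¹ 1 1) * C (S 1 1)) * χ i * e2 * hI

lemma d3_d3 {N : ℕ} (ρ : Om3 N) : d3 (d3 ρ) = 0 := by
  funext k
  fin_cases k <;> simp [d3] <;> ring

lemma d3_ofR3 {N : ℕ} (r : R3 N) : d3 (ofR3 r) = 0 := by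
  funext k
  fin_cases k <;> simp [d3, ofR3]

lemma d3_add {N : ℕ} (ρ τ : Om3 N) : d3 (ρ + τ) = d3 ρ + d3 τ := by
  funext k
  fin_cases k <;> simp [d3] <;> ring

/-- The cohomology is concentrated in degree zero. -/
lemma d3_exact {N : ℕ} (z k l : Fin N) (hk : k ≠ z) (hl : l ≠ z) (hkl : k ≠ l)
    (ω : Om3 N) (h : d3 ω = 0) : ∃ r s t w : R3 N,
      ω = ofR3 (ω 0) + d3 ![0, 0, 0, 0, r, s, t, w] := by
  have hP0 : Pr z ≠ 0 := fun h => by simpa [h] using evPt_Pr z k l hk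
  have hQ0 : Qr z ≠ 0 := fun h => by simpa [h] using evPt_Qr z k l hl
  have hPP : (X (Sum.inl z) ^ 2 + Pr z : R3 N) ≠ 0 := fun h => by
    have := congrArg (evPt k l) h
    rw [map_add, evPt_Pr z k l hk, map_pow, show X (Sum.inl z) = ψ z from rfl, evPt_ψ] at this
    simp [hk.symm] at this
  have hQQ : (X (Sum.inr z) ^ 2 + Qr z : R3 N) ≠ 0 := fun h => by
    have := congrArg (evPt k l) h
    rw [map_add, evPt_Qr z k l hl, map_pow, show X (Sum.inr z) = χ z from rfl, evPt_χ] at this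
    simp [hl.symm] at this
  have hD : Pr z * Qr z - Sr z ^ 2 ≠ 0 := fun h => by
    have := congrArg (evPt k l) h
    rw [map_sub, map_mul, map_pow, evPt_Pr z k l hk, evPt_Qr z k l hl, evPt_Sr z k l hkl] at this
    simp at this
  have hxy : (Sum.inl z : Fin N ⊕ Fin N) ≠ Sum.inr z := by simp
  have e0 := congrFun h 0
  have e1 := congrFun h 1
  have e2 := congrFun h 2
  have e3 := congrFun h 3
  have e6 := congrFun h 6
  simp only [d3, Matrix.cons_val, Pi.zero_apply] at e0 e1 e2 e3 e6
  rw [PP_eq z, QQ_eq z, SS_eq z] at e0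
  obtain ⟨r, s, t, f1, f2, f3⟩ := koszul3 _ _ hxy (Pr z) (Qr z) (Sr z) (ω 1) (ω 2) (ω 3)
    (Pr_mem z) (Qr_mem z) (Sr_mem z) hP0 hQ0 hPP hQQ hD e0
  have e3' := e3
  rw [PP_eq z, QQ_eq z] at e3'
  obtain ⟨w, g1, g2⟩ := koszul2 _ _ hxy (Pr z) (Qr z) (ω 5) (ω 6)
    (Pr_mem z) (Qr_mem z) hP0 hPP hQQ e3'
  rw [← QQ_eq z, ← SS_eq z] at f1
  rw [← PP_eq z, ← SS_eq z] at f2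
  rw [← PP_eq z, ← QQ_eq z] at f3
  rw [← QQ_eq z] at g1 hQQ
  rw [← PP_eq z] at g2 hPP
  have g0 : ω 4 = -(SS N * w) := by
    apply mul_left_cancel₀ hQQ
    rw [g1] at e1
    linear_combination -e1
  have g7 : ω 7 = 0 := (mul_eq_zero.mp e6).resolve_left hPP
  refine ⟨r, s, t, -w, ?_⟩
  funext k
  fin_cases k <;> simp [d3, ofR3, f1, f2, f3, g0, g1, g2, g7]

/-- for `N ≥ 3` and any invertible `S` (equivalent spinor
representation), (i) `dω = 0` iff `ω ∼ a + Σ_α ξ₁^α a_α` with coefficients in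
`ℂ[ψ₂,…,ψ_N, χ₂,…,χ_N]`; (ii) such a combination is `∼ 0` iff
`a = ½ Σ_{i,j≥2} (ξᵢ·ξⱼ)² d` and `Σ_α ξ₁^α a_α = Σ_{i≥2} (ξ₁·ξᵢ)(ξᵢ¹d₁ + ξᵢ²d₂)`
for some `d, d₁, d₂ ∈ ℂ[ψ₂,…,ψ_N, χ₂,…,χ_N]`. -/
theorem stmt11 (N : ℕ) (hN : 3 ≤ N)
    (S : Matrix (Fin 2) (Fin 2) ℂ) (hS : IsUnit S.det) :
    (∀ ω : Om3 N, d3 ω = 0 ↔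
      ∃ a ∈ coefRing3 N (by omega), ∃ a1 ∈ coefRing3 N (by omega),
      ∃ a2 ∈ coefRing3 N (by omega),
        Equiv3 ω (ofR3 (a + xi3 S ⟨0, by omega⟩ 0 * a1 + xi3 S ⟨0, by omega⟩ 1 * a2)))
    ∧
    (∀ a a1 a2 : R3 N,
      a ∈ coefRing3 N (by omega) → a1 ∈ coefRing3 N (by omega) →
      a2 ∈ coefRing3 N (by omega) →
      (Equiv3 (ofR3 (a + xi3 S ⟨0, by omega⟩ 0 * a1 + xi3 S ⟨0, by omega⟩ 1 * a2)) 0 ↔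
        ∃ d ∈ coefRing3 N (by omega), ∃ d1 ∈ coefRing3 N (by omega),
        ∃ d2 ∈ coefRing3 N (by omega),
          a = C (1/2 : ℂ)
              * (∑ i ∈ Finset.univ.erase (⟨0, by omega⟩ : Fin N),
                 ∑ j ∈ Finset.univ.erase (⟨0, by omega⟩ : Fin N),
                   xidot i j ^ 2) * d
          ∧ xi3 S (⟨0, by omega⟩ : Fin N) 0 * a1 + xi3 S (⟨0, by omega⟩ : Fin N) 1 * a2
            = ∑ i ∈ Finset.univ.erase (⟨0, by omega⟩ : Fin N),
                xidot ⟨0, by omega⟩ i * (xi3 S i 0 * d1 + xi3 S i 1 * d2))) := by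
  have hz : 0 < N := by omega
  set z : Fin N := ⟨0, hz⟩ with hzdef
  have hk : (⟨1, by omega⟩ : Fin N) ≠ z := by simp [hzdef]
  have hl : (⟨2, by omega⟩ : Fin N) ≠ z := by simp [hzdef]
  have hkl : (⟨1, by omega⟩ : Fin N) ≠ ⟨2, by omega⟩ := by simp
  have hP0 : Pr z ≠ 0 := fun h => by simpa [h] using evPt_Pr z _ ⟨2, by omega⟩ hk
  have hQ0 : Qr z ≠ 0 := fun h => by simpa [h] using evPt_Qr z ⟨1, by omega⟩ _ hl
  have hxy : (Sum.inl z : Fin N ⊕ Fin N) ≠ Sum.inr z := by simp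
  have hC : ∀ c : ℂ, ∀ e ∈ coefRing3 N hz, C c * e ∈ coefRing3 N hz := fun c e he =>
    mul_mem (Subalgebra.algebraMap_mem _ c) he
  constructor
  · intro ω
    constructor
    · intro h
      obtain ⟨r, s, t, w, hω⟩ := d3_exact z _ _ hk hl hkl ω h
      obtain ⟨u, v, c0, h0, c1, h1, c2, h2, c3, h3, e⟩ :=
        exist2 (Sum.inl z) (Sum.inr z) (Pr z) (Qr z) (Pr_mem z) (Qr_mem z) (ω 0)
      rw [← PP_eq z, ← QQ_eq z] at e
      refine ⟨c0 - Sr z * c3, sub_mem h0 (mul_mem (Sr_mem z) h3),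
        C (S 0 0) * c1 - C (Complex.I * S 0 1) * c2, sub_mem (hC _ _ h1) (hC _ _ h2),
        C (S 1 0) * c1 - C (Complex.I * S 1 1) * c2, sub_mem (hC _ _ h1) (hC _ _ h2), ?_⟩
      rw [add_assoc, xi_inv S hS c1 c2 z]
      refine ⟨![0, u, v, c3, 0, 0, 0, 0] + ![0, 0, 0, 0, r, s, t, w], ?_⟩
      rw [d3_add, sub_eq_iff_eq_add]
      conv_lhs => rw [hω]
      have hr : ofR3 (ω 0) = d3 ![0, u, v, c3, 0, 0, 0, 0]
          + ofR3 (c0 - Sr z * c3 + (ψ z * c1 + χ z * c2)) := by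
        funext k
        fin_cases k <;> simp [d3, ofR3]
        rw [e, SS_eq z]
        simp only [ψ, χ]
        ring
      rw [hr]
      abel
    · rintro ⟨a, _, a1, _, a2, _, ρ, hρ⟩
      rw [sub_eq_iff_eq_add] at hρ
      rw [hρ, d3_add, d3_d3, d3_ofR3, add_zero]
  · intro a a1 a2 ha ha1 ha2
    rw [sum_xidot_sq z]
    constructor
    · rintro ⟨ρ, hρ⟩
      have e := congrFun hρ 0
      simp only [ofR3, d3, sub_zero, Matrix.cons_val] at e
      rw [PP_eq z, QQ_eq z, SS_eq z] at e
      obtain ⟨u', v', c1, h1, c2, h2, c3, h3, _, f0, f1, f2⟩ := mulS _ _ hxy (Pr z) (Qr z) (Sr z)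
        a (C (S⁻¹ 0 0) * a1 + C (S⁻¹ 0 1) * a2)
        (C (Complex.I * S⁻¹ 1 0) * a1 + C (Complex.I * S⁻¹ 1 1) * a2) (ρ 1) (ρ 2) (ρ 3)
        (Pr_mem z) (Qr_mem z) (Sr_mem z) ha (add_mem (hC _ _ ha1) (hC _ _ ha2))
        (add_mem (hC _ _ ha1) (hC _ _ ha2)) hP0 hQ0
        (by rw [← e]; simp only [xi3, ψ, χ]; ring)
      refine ⟨c3, h3, C (S 0 0) * c1 - C (Complex.I * S 0 1) * (-c2),
        sub_mem (hC _ _ h1) (hC _ _ (neg_mem h2)),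
        C (S 1 0) * c1 - C (Complex.I * S 1 1) * (-c2),
        sub_mem (hC _ _ h1) (hC _ _ (neg_mem h2)), f0, ?_⟩
      simp only [xi_inv S hS c1 (-c2)]
      rw [sum_xidot_lin z]
      simp only [xi3, ψ, χ]
      linear_combination X (Sum.inl z) * f1 + X (Sum.inr z) * f2
    · rintro ⟨d, hd, d1, hd1, d2, hd2, f0, f1⟩
      have g : ∀ i : Fin N, xi3 S i 0 * d1 + xi3 S i 1 * d2
          = ψ i * (C (S⁻¹ 0 0) * d1 + C (S⁻¹ 0 1) * d2)
            + χ i * (C (Complex.I * S⁻¹ 1 0) * d1 + C (Complex.I * S⁻¹ 1 1) * d2) := by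
        intro i; simp only [xi3]; ring
      simp only [g] at f1
      rw [sum_xidot_lin z] at f1
      generalize C (S⁻¹ 0 0) * d1 + C (S⁻¹ 0 1) * d2 = e1 at f1
      generalize C (Complex.I * S⁻¹ 1 0) * d1 + C (Complex.I * S⁻¹ 1 1) * d2 = e2 at f1
      rw [add_assoc, f1, f0]
      refine ⟨![0, Qr z * d - X (Sum.inr z) * e1,
        -(X (Sum.inl z) ^ 2 * d) + X (Sum.inl z) * e2,
        (X (Sum.inl z) * X (Sum.inr z) - Sr z) * d + X (Sum.inl z) * e1 - X (Sum.inr z) * e2,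
        0, 0, 0, 0], ?_⟩
      funext k
      fin_cases k <;> simp [d3, ofR3]
      rw [PP_eq z, QQ_eq z, SS_eq z]
      ring
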